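/- Let r : 2^𝒮 → ℕ be the rank function of a matroid on ground set 𝒮, i.e., r satisfies (R1) 0 ≤ r(S) ≤ |S| for all S ⊆ 𝒮, (R2) r(S) ≤ r(S') whenever S ⊆ S' ⊆ 𝒮, and (R3) r(S ∪ S') + r(S ∩ S') ≤ r(S) + r(S') for all S, S' ⊆ 𝒮. Define the matroidal distributional preference by: S ≿ S' iff |S| = |S'| = q and r(S) ≥ r(S'), together with S ≿ S for every S. Then ≿ satisfies the upper-bound property, the maximizer property, and the improvement property. -/

import Mathlib

open Finset

variable {α : Type*}

/-- Strict part of a distributional preference. -/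
def strictPref (pref : Finset α → Finset α → Prop) (A B : Finset α) : Prop :=
  pref A B ∧ ¬ pref B A

/-- Indifference part of a distributional preference. -/
def indiffPref (pref : Finset α → Finset α → Prop) (A B : Finset α) : Prop :=
  pref A B ∧ pref B A

/-- Incomparability under a distributional preference. -/
def incomparable (pref : Finset α → Finset α → Prop) (A B : Finset α) : Prop :=
  ¬ pref A B ∧ ¬ pref B A

/-- `NW q S` is the collection of non-wasteful subsets of `S`. -/
def NW (q : ℕ) (S : Finset α) : Set (Finset α) :=
  {T | T ⊆ S ∧ T.card = min q S.card}

/-- The frontier of `S`: non-wasteful subsets undominated w.r.t. the preference. -/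
def frontierSet (pref : Finset α → Finset α → Prop) (q : ℕ) (S : Finset α) :
    Set (Finset α) :=
  {T | T ∈ NW q S ∧ ∀ T' ∈ NW q S, ¬ strictPref pref T' T}

/-- The upper-bound property of a distributional preference. -/
def upperBoundProperty [DecidableEq α] (pref : Finset α → Finset α → Prop) (q : ℕ) : Prop :=
  ∀ S S' : Finset α, S.card = q → S'.card = q → incomparable pref S S' →
    ∃ S'' ∈ NW q (S ∪ S'), strictPref pref S'' S ∨ strictPref pref S'' S'

/-- The maximizer property of a distributional preference. -/
def maximizerProperty [DecidableEq α] (pref : Finset α → Finset α → Prop) (q : ℕ) : Prop :=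
  ∀ S S' : Finset α, S ≠ S' → S.card = q → S'.card = q →
    (∀ S'' ∈ NW q (S ∪ S'), pref S S'' ∧ pref S' S'') →
    ∃ s ∈ S \ S', ∃ s' ∈ S' \ S,
      indiffPref pref (S.erase s ∪ {s'}) S ∧ indiffPref pref (S'.erase s' ∪ {s}) S'

/-- The improvement property of a distributional preference. -/
def improvementProperty [DecidableEq α] (pref : Finset α → Finset α → Prop) (q : ℕ) : Prop :=
  ∀ S S' : Finset α, S.card = q → S'.card = q → ∀ s ∈ S \ S',
    (∀ S'' ∈ NW q (S ∪ S'), s ∉ S'' → strictPref pref S S'') →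
    (∀ S'' ∈ NW q (S ∪ S'), s ∈ S'' → pref S S'') →
    ∃ s' ∈ S' \ S, strictPref pref (S'.erase s' ∪ {s}) S'

/-- A choice rule is non-wasteful. -/
def nonWasteful (q : ℕ) (Ch : Finset α → Finset α) : Prop :=
  ∀ S : Finset α, (Ch S).card = min q S.card

/-- A choice rule promotes the distributional preference. -/
def promotesPref (pref : Finset α → Finset α → Prop) (Ch : Finset α → Finset α) : Prop :=
  ∀ S : Finset α, ∀ S' ⊆ S, S'.card = (Ch S).card → ¬ strictPref pref S' (Ch S)

/-- A choice rule guarantees no justified envy with respect to priority ranking `π`. -/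
def noJustifiedEnvy [DecidableEq α] (pref : Finset α → Finset α → Prop)
    (π : α → α → Prop) (Ch : Finset α → Finset α) : Prop :=
  ∀ S : Finset α, ∀ s ∈ Ch S, ∀ s' ∈ S \ Ch S,
    pref ((Ch S).erase s ∪ {s'}) (Ch S) → π s s'

/-- Path independence of a choice rule. -/
def pathIndependent [DecidableEq α] (Ch : Finset α → Finset α) : Prop :=
  ∀ S S' : Finset α, Ch (S ∪ S') = Ch (Ch S ∪ S')

/-- Consistency of a choice rule. -/
def consistentRule [DecidableEq α] (Ch : Finset α → Finset α) : Prop :=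
  ∀ S : Finset α, ∀ s ∈ S, s ∉ Ch S → Ch (S.erase s) = Ch S

/-- Substitutability of a choice rule. -/
def substitutableRule [DecidableEq α] (Ch : Finset α → Finset α) : Prop :=
  ∀ S : Finset α, ∀ s ∈ S, ∀ s' ∈ S, s ≠ s' → s ∈ Ch S → s ∈ Ch (S.erase s')

/-- `l` lists the elements of `A` in strictly decreasing `π`-priority. -/
def descList [DecidableEq α] (π : α → α → Prop) (A : Finset α) (l : List α) : Prop :=
  l.Pairwise π ∧ l.Nodup ∧ l.toFinset = A

/-- `A` priority dominates `B` with respect to `π`. -/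
def priorityDominates [DecidableEq α] (π : α → α → Prop) (A B : Finset α) : Prop :=
  B.card ≤ A.card ∧
  ∀ la lb : List α, descList π A la → descList π B lb →
    ∀ (k : ℕ) (ha : k < la.length) (hb : k < lb.length),
      la.get ⟨k, ha⟩ = lb.get ⟨k, hb⟩ ∨ π (la.get ⟨k, ha⟩) (lb.get ⟨k, hb⟩)

/-- The revealed preference axiom for a choice rule: no revealed-priority cycles. -/
def revealedPrefAxiom [DecidableEq α] (pref : Finset α → Finset α → Prop)
    (Ch : Finset α → Finset α) : Prop :=
  ¬ ∃ (K : ℕ) (s : ℕ → α) (T : ℕ → Finset α), 0 < K ∧ s K = s 0 ∧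
    ∀ k < K, s k ∈ Ch (T k) ∧ s (k + 1) ∈ T k \ Ch (T k) ∧
      pref ((Ch (T k)).erase (s k) ∪ {s (k + 1)}) (Ch (T k))

/-- The matroidal distributional preference induced by a rank function `r`:
`A ≿ B` iff `|A| = |B| = q` and `r A ≥ r B`, together with reflexivity. -/
def matroidalPref {α : Type*} (r : Finset α → ℕ) (q : ℕ) (A B : Finset α) : Prop :=
  A = B ∨ (A.card = q ∧ B.card = q ∧ r B ≤ r A)

structure IsRk {α : Type*} [DecidableEq α] (r : Finset α → ℕ) : Prop where
  h1 : ∀ S : Finset α, r S ≤ S.card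
  h2 : ∀ S S' : Finset α, S ⊆ S' → r S ≤ r S'
  h3 : ∀ S S' : Finset α, r (S ∪ S') + r (S ∩ S') ≤ r S + r S'

theorem IsRk.union_le {α : Type*} [DecidableEq α] {r : Finset α → ℕ} (h : IsRk r)
    (X Y : Finset α) : r (X ∪ Y) ≤ r X + Y.card := by
  have a := h.h3 X Y
  have b := h.h1 Y
  omega

theorem IsRk.closure {α : Type*} [DecidableEq α] {r : Finset α → ℕ} (h : IsRk r)
    (A T : Finset α) (hT : ∀ u ∈ T, r (insert u A) ≤ r A) : r (A ∪ T) ≤ r A := by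
  induction T using Finset.induction_on with
  | empty => simp
  | insert u T hu ih =>
    have i1 := ih (fun v hv => hT v (Finset.mem_insert_of_mem hv))
    have i2 := hT u (Finset.mem_insert_self _ _)
    have i3 := h.h3 (A ∪ T) (insert u A)
    have i4 := h.h2 A ((A ∪ T) ∩ insert u A) (by intro x; simp; tauto)
    have i5 : A ∪ T ∪ insert u A = A ∪ insert u T := by ext x; simp; tauto
    rw [i5] at i3
    omega

theorem IsRk.coloops {α : Type*} [DecidableEq α] {r : Finset α → ℕ} (h : IsRk r)
    (X T : Finset α) (hTX : T ⊆ X) (hT : ∀ b ∈ T, r (X.erase b) < r X) :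
    r (X \ T) + T.card ≤ r X := by
  induction T using Finset.induction_on with
  | empty => simp
  | insert b T hb ih =>
    have i1 := ih (fun v hv => hTX (Finset.mem_insert_of_mem hv))
      (fun v hv => hT v (Finset.mem_insert_of_mem hv))
    have i2 := hT b (Finset.mem_insert_self _ _)
    have i3 := h.h3 (X \ T) (X.erase b)
    have hbX : b ∈ X := hTX (Finset.mem_insert_self _ _)
    have i4 : X \ T ∪ X.erase b = X := by
      ext x
      by_cases hx : x = b
      · subst hx; simp [hb, hbX]
      · simp [hx]; tauto
    have i5 : (X \ T) ∩ X.erase b = X \ insert b T := by ext x; simp; tauto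
    rw [i4, i5] at i3
    rw [Finset.card_insert_of_notMem hb]
    omega

theorem IsRk.elong {α : Type*} [DecidableEq α] {r : Finset α → ℕ} (h : IsRk r) (k : ℕ) :
    IsRk (fun X => min X.card (r X + k)) := by
  refine ⟨fun S => min_le_left _ _, fun S T hST => ?_, fun S T => ?_⟩
  · have a := h.h2 S T hST
    have b := Finset.card_le_card hST
    show min _ _ ≤ min _ _
    omega
  · have a := h.h3 S T
    have b := Finset.card_union_add_card_inter S T
    have c := h.union_le S (T \ S)
    have d := h.union_le T (S \ T)
    have e : S ∪ T \ S = S ∪ T := by ext x; simp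
    have f : T ∪ S \ T = S ∪ T := by ext x; simp; tauto
    rw [e] at c
    rw [f] at d
    have g := Finset.card_sdiff_add_card_inter S T
    have i := Finset.card_sdiff_add_card_inter T S
    rw [Finset.inter_comm T S] at i
    show min _ _ + min _ _ ≤ min _ _ + min _ _
    omega

theorem IsRk.trunc {α : Type*} [DecidableEq α] {r : Finset α → ℕ} (h : IsRk r) (q : ℕ) :
    IsRk (fun X => min q (r X)) := by
  refine ⟨fun S => (min_le_right _ _).trans (h.h1 S), fun S T hST => ?_, fun S T => ?_⟩
  · have a := h.h2 S T hST
    show min _ _ ≤ min _ _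
    omega
  · have a := h.h3 S T
    have b := h.h2 (S ∩ T) S Finset.inter_subset_left
    have c := h.h2 (S ∩ T) T Finset.inter_subset_right
    show min _ _ + min _ _ ≤ min _ _ + min _ _
    omega

theorem IsRk.symmExch {α : Type*} [DecidableEq α] {r : Finset α → ℕ} (h : IsRk r) (q : ℕ)
    (hq : 0 < q) (hr : ∀ X, r X ≤ q) (S S' : Finset α) (hS' : S'.card = q)
    (rS : r S = q) (rS' : r S' = q) (s : α) (hs : s ∈ S) (hs' : s ∉ S')
    (hcS : S.card = q) :
    ∃ t ∈ S' \ S, q ≤ r (insert t (S.erase s)) ∧ q ≤ r (insert s (S'.erase t)) := by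
  by_contra hcon
  push Not at hcon
  set A := S'.filter (fun b => q ≤ r (insert s (S'.erase b))) with hA
  have hAS : A ⊆ S' := Finset.filter_subset _ _
  have e1 : r (insert s S') = q := le_antisymm (hr _) (rS' ▸ h.h2 _ _ (Finset.subset_insert _ _))
  have e2 := h.coloops (insert s S') (S' \ A)
    (fun x hx => Finset.mem_insert_of_mem (Finset.mem_sdiff.1 hx).1) (by
      intro b hb
      simp only [hA, Finset.mem_sdiff, Finset.mem_filter, not_and, not_le] at hb
      have hne : s ≠ b := fun hh => hs' (hh ▸ hb.1)
      rw [Finset.erase_insert_of_ne hne, e1]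
      exact hb.2 hb.1)
  have e3 : insert s S' \ (S' \ A) = insert s A := by
    ext x
    by_cases hx : x = s
    · subst hx; simp [hs']
    · have := @hAS x
      simp [hx]; tauto
  rw [e3, e1] at e2
  have e4 := h.union_le A (S' \ A)
  rw [Finset.union_sdiff_of_subset hAS, rS'] at e4
  have e5 : r (S.erase s) ≤ q - 1 := by
    have := h.h1 (S.erase s)
    rw [Finset.card_erase_of_mem hs, hcS] at this
    exact this
  have e7 : q ≤ r (S.erase s) + 1 := by
    have := h.union_le (S.erase s) {s}
    rw [show S.erase s ∪ {s} = S by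
      rw [Finset.union_comm, ← Finset.insert_eq, Finset.insert_erase hs], rS] at this
    simpa using this
  have e6 := h.closure (S.erase s) A (by
    intro u hu
    by_cases huS : u ∈ S
    · have hne : u ≠ s := fun hh => hs' (hh ▸ hAS hu)
      rw [Finset.insert_eq_of_mem (Finset.mem_erase.2 ⟨hne, huS⟩)]
    · have h1 : q ≤ r (insert s (S'.erase u)) := (Finset.mem_filter.1 hu).2
      have h2 := hcon u (Finset.mem_sdiff.2 ⟨hAS hu, huS⟩)
      by_contra h3
      have := h2 (by omega)
      omega)
  have e8 := h.h3 (S.erase s ∪ A) (insert s A)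
  have e9 := h.h2 S (S.erase s ∪ A ∪ insert s A) (by intro x; simp; tauto)
  have e10 := h.h2 A ((S.erase s ∪ A) ∩ insert s A) (by intro x; simp; tauto)
  omega

/-- If `r` is the rank function of a matroid on `𝒮` (cardinality
bound, monotonicity, submodularity), then the matroidal distributional
preference satisfies the upper-bound, maximizer, and improvement properties. -/
theorem stmt14 {α : Type*} [Fintype α] [Nonempty α] [DecidableEq α]
    (q : ℕ) (hq : 0 < q) (r : Finset α → ℕ)
    (hR1 : ∀ S : Finset α, r S ≤ S.card)
    (hR2 : ∀ S S' : Finset α, S ⊆ S' → r S ≤ r S')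
    (hR3 : ∀ S S' : Finset α, r (S ∪ S') + r (S ∩ S') ≤ r S + r S') :
    upperBoundProperty (matroidalPref r q) q ∧
    maximizerProperty (matroidalPref r q) q ∧
    improvementProperty (matroidalPref r q) q := by
  have h : IsRk r := ⟨hR1, hR2, hR3⟩
  have nw : ∀ S S' T : Finset α, S.card = q → T ⊆ S ∪ S' → T.card = q → T ∈ NW q (S ∪ S') := by
    intro S S' T hS hT hTq
    refine ⟨hT, ?_⟩
    have := Finset.card_le_card (Finset.subset_union_left : S ⊆ S ∪ S')
    omega
  have pr : ∀ S T : Finset α, matroidalPref r q S T → r T ≤ r S := by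
    rintro S T (rfl | ⟨-, -, h⟩)
    · exact le_rfl
    · exact h
  have cu : ∀ (S : Finset α) (s t : α), s ∈ S → t ∉ S → (S.erase s ∪ {t}).card = S.card := by
    intro S s t hs ht
    rw [Finset.union_comm, ← Finset.insert_eq, Finset.card_insert_of_notMem
      (fun hh => ht (Finset.mem_of_mem_erase hh)), Finset.card_erase_add_one hs]
  refine ⟨?_, ?_, ?_⟩
  · intro S S' hS hS' hinc
    exfalso
    rcases le_total (r S) (r S') with hle | hle
    · exact hinc.2 (Or.inr ⟨hS', hS, hle⟩)
    · exact hinc.1 (Or.inr ⟨hS, hS', hle⟩)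
  · intro S S' hne hS hS' hmax
    have hSS : r S' = r S := le_antisymm
      (pr _ _ (hmax S' (nw S S' S' hS Finset.subset_union_right hS')).1)
      (pr _ _ (hmax S (nw S S' S hS Finset.subset_union_left hS)).2)
    obtain ⟨s, hs, hs'⟩ : ∃ s ∈ S, s ∉ S' := by
      by_contra hcon
      push Not at hcon
      exact hne (Finset.eq_of_subset_of_card_le hcon (by omega))
    have hSq := hR1 S
    obtain ⟨t, ht, h1, h2⟩ := ((h.elong (q - r S)).trunc q).symmExch q hq
      (fun X => min_le_left _ _) S S' hS'
      (show min _ (min _ _) = _ by omega) (show min _ (min _ _) = _ by omega) s hs hs' hS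
    have htS' := (Finset.mem_sdiff.1 ht).1
    have htS := (Finset.mem_sdiff.1 ht).2
    refine ⟨s, Finset.mem_sdiff.2 ⟨hs, hs'⟩, t, ht, ?_⟩
    rw [Finset.insert_eq, Finset.union_comm] at h1 h2
    have c1 := cu S s t hs htS
    have c2 := cu S' t s htS' hs'
    have m1 := pr _ _ (hmax (S.erase s ∪ {t}) (nw S S' _ hS (by
      intro x; simp; rintro (rfl | hx) <;> tauto) (by omega))).1
    have m2 := pr _ _ (hmax (S'.erase t ∪ {s}) (nw S S' _ hS (by
      intro x; simp; rintro (rfl | hx) <;> tauto) (by omega))).1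
    refine ⟨⟨Or.inr ⟨?_, ?_, ?_⟩, Or.inr ⟨?_, ?_, ?_⟩⟩,
      ⟨Or.inr ⟨?_, ?_, ?_⟩, Or.inr ⟨?_, ?_, ?_⟩⟩⟩ <;> omega
  · intro S S' hS hS' s hsd hstr _
    obtain ⟨hs, hs'⟩ := Finset.mem_sdiff.1 hsd
    have lt : ∀ T, T ⊆ S ∪ S' → T.card = q → s ∉ T → r T < r S := by
      intro T hT hTq hsT
      by_contra hcon
      exact (hstr T (nw S S' T hS hT hTq) hsT).2 (Or.inr ⟨hTq, hS, by omega⟩)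
    have eS : S.erase s ∪ {s} = S := by
      rw [Finset.union_comm, ← Finset.insert_eq, Finset.insert_erase hs]
    have l1 := h.union_le (S.erase s) {s}
    rw [eS, Finset.card_singleton] at l1
    have ltu : ∀ u ∈ S' \ S, r (insert u (S.erase s)) < r S := by
      intro u hu
      obtain ⟨hu1, hu2⟩ := Finset.mem_sdiff.1 hu
      rw [Finset.insert_eq, Finset.union_comm]
      apply lt
      · intro x; simp; rintro (rfl | hx) <;> tauto
      · rw [cu S s u hs hu2, hS]
      · simp; rintro rfl; exact hu2 hs
    have l2 := h.closure (S.erase s) (S' \ S) (fun u hu => by have := ltu u hu; omega)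
    have hlt' := lt S' Finset.subset_union_right hS' hs'
    have cSS : (S \ S').card = (S' \ S).card := by
      have a := Finset.card_sdiff_add_card_inter S S'
      have b := Finset.card_sdiff_add_card_inter S' S
      rw [Finset.inter_comm S' S] at b
      omega
    have ex : ∃ t ∈ S' \ S, r S' ≤ r (S'.erase t) := by
      by_contra hcon
      push Not at hcon
      have a := h.coloops S' (S' \ S) Finset.sdiff_subset hcon
      have b := h.union_le (S' \ (S' \ S)) (S \ S')
      have c : S' \ (S' \ S) ∪ S \ S' = S := by ext x; simp; tauto
      rw [c] at b
      omega
    obtain ⟨t, ht, hrt⟩ := ex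
    have hne : (S' \ S).Nonempty := ⟨t, ht⟩
    have l3 := ltu t ht
    have l4 := hR2 (S.erase s) _ (Finset.subset_insert t (S.erase s))
    obtain ⟨ht1, ht2⟩ := Finset.mem_sdiff.1 ht
    have k1 := hR3 (S.erase s ∪ S' \ S) (S'.erase t ∪ {s})
    have k2 := hR2 S (S.erase s ∪ S' \ S ∪ (S'.erase t ∪ {s})) (by intro x; simp; tauto)
    have k3 := hR2 (S'.erase t) ((S.erase s ∪ S' \ S) ∩ (S'.erase t ∪ {s})) (by
      intro x hx
      have hx' := Finset.mem_of_mem_erase hx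
      have : x ≠ s := fun hh => hs' (hh ▸ hx')
      simp only [Finset.mem_inter, Finset.mem_union, Finset.mem_erase, Finset.mem_sdiff]
      refine ⟨?_, Or.inl (Finset.mem_erase.1 hx)⟩
      tauto)
    have hc := cu S' t s ht1 hs'
    have key : r S' < r (S'.erase t ∪ {s}) := by omega
    refine ⟨t, ht, Or.inr ⟨by omega, hS', by omega⟩, fun hcon => ?_⟩
    have := pr _ _ hcon
    omega
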